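/- Let G be a finite connected simple graph. If G has an even cycle of length ≥ 8 possessing a chord and G has no cycle of length 4, then deg(P_G) ≥ 3. -/

import Mathlib

open MvPolynomial Pointwise

/-- `ρ({i,j}) = e_i + e_j` : the 0/1 (incidence) vector of an edge. -/
noncomputable def rho {N : ℕ} (e : Sym2 (Fin N)) : Fin N → ℝ :=
  fun v => if v ∈ e then 1 else 0

/-- The edge polytope of a graph on `Fin N`. -/
noncomputable def edgePolytope {N : ℕ} (G : SimpleGraph (Fin N)) : Set (Fin N → ℝ) :=
  convexHull ℝ (rho '' G.edgeSet)

/-- Number of lattice points of the `t`-th dilation (`= 1` for `t = 0`). -/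
noncomputable def ehr {N : ℕ} (P : Set (Fin N → ℝ)) (t : ℕ) : ℕ :=
  if t = 0 then 1 else Nat.card {x : Fin N → ℤ // (fun i => (x i : ℝ)) ∈ (t : ℝ) • P}

/-- The dimension of a polytope: the rank of the direction of its affine span. -/
noncomputable def polyDim {N : ℕ} (P : Set (Fin N → ℝ)) : ℕ :=
  Module.finrank ℝ (affineSpan ℝ P).direction

/-- The `i`-th coefficient of `(1-λ)^{d+1} (1 + Σ_{t≥1} |tP ∩ Z^N| λ^t)`. -/
noncomputable def deltaCoeff {N : ℕ} (P : Set (Fin N → ℝ)) (i : ℕ) : ℤ :=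
  ∑ j ∈ Finset.range (i + 1),
    (-1 : ℤ) ^ j * (Nat.choose (polyDim P + 1) j : ℤ) * (ehr P (i - j) : ℤ)

/-- The degree of the δ-polynomial of `P`. -/
noncomputable def polyDeg {N : ℕ} (P : Set (Fin N → ℝ)) : ℕ :=
  sSup {i : ℕ | deltaCoeff P i ≠ 0}

/-- The monomial `t_i t_j s` attached to an edge `{i,j}`; `s` is the variable `none`. -/
noncomputable def edgeMonom (K : Type*) [Field K] {V : Type*} (e : Sym2 V) :
    MvPolynomial (Option V) K :=
  Sym2.lift ⟨fun i j => X (some i) * X (some j) * X none, fun i j => by ring⟩ e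

/-- The edge ring `K[G]`, the subalgebra generated by the monomials `t^{ρ(e)} s`. -/
noncomputable def edgeRing (K : Type*) [Field K] {V : Type*} (G : SimpleGraph V) :
    Subalgebra K (MvPolynomial (Option V) K) :=
  Algebra.adjoin K (edgeMonom K '' G.edgeSet)

/-- The toric ideal `I_G`: kernel of `x_e ↦ t^{ρ(e)} s`. -/
noncomputable def toricIdeal (K : Type*) [Field K] {V : Type*} (G : SimpleGraph V) :
    Ideal (MvPolynomial G.edgeSet K) :=
  RingHom.ker (MvPolynomial.aeval (fun e : G.edgeSet => edgeMonom K (e : Sym2 V)) :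
    MvPolynomial G.edgeSet K →ₐ[K] MvPolynomial (Option V) K)

/-- `S/I` has a `q`-linear (minimal graded free) resolution: there is a graded free
resolution of `S/I` in which the free module at homological step `i ≥ 1` is generated
in the single degree `q + i - 1`; equivalently all Betti numbers `β_{i,j}` with
`j ≠ q + i - 1` vanish. -/
def HasLinearResolution {σ K : Type*} [Field K] (q : ℕ)
    (I : Ideal (MvPolynomial σ K)) : Prop :=
  ∃ (b : ℕ → ℕ)
    (φ₀ : (Fin (b 0) →₀ MvPolynomial σ K) →ₗ[MvPolynomial σ K] MvPolynomial σ K)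
    (φ : ∀ i : ℕ,
      (Fin (b (i + 1)) →₀ MvPolynomial σ K) →ₗ[MvPolynomial σ K]
        (Fin (b i) →₀ MvPolynomial σ K)),
    LinearMap.range φ₀ = I ∧
    LinearMap.ker φ₀ = LinearMap.range (φ 0) ∧
    (∀ i, LinearMap.ker (φ i) = LinearMap.range (φ (i + 1))) ∧
    (∀ j, (φ₀ (Finsupp.single j 1)).IsHomogeneous q) ∧
    (∀ i j k, ((φ i (Finsupp.single j 1)) k).IsHomogeneous 1)

section ConeDecomposition

variable {ι W : Type*} [NormedAddCommGroup W] [NormedSpace ℝ W]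

/-- The subfamily of `a` indexed by `B` is a basis of the ambient space. -/
def IsSubbasis (a : ι → W) (B : Finset ι) : Prop :=
  LinearIndepOn ℝ a (B : Set ι) ∧ Submodule.span ℝ (a '' B) = ⊤

/-- The basis given by a subbasis. -/
noncomputable def IsSubbasis.basis {a : ι → W} {B : Finset ι} (hB : IsSubbasis a B) :
    Module.Basis B ℝ W :=
  Module.Basis.mk (v := fun i : B => a i) hB.1 <| by
    rw [← hB.2]
    apply le_of_eq
    congr 1
    ext x
    simp

theorem IsSubbasis.basis_apply {a : ι → W} {B : Finset ι} (hB : IsSubbasis a B) (i : B) :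
    hB.basis i = a i :=
  Module.Basis.mk_apply ..

theorem IsSubbasis.exists_coords [Fintype ι] {a : ι → W} {B : Finset ι} (hB : IsSubbasis a B) :
    ∃ f : W →ₗ[ℝ] ι → ℝ, (∀ x, ∑ i, f x i • a i = x) ∧ ∀ x, ∀ i ∉ B, f x i = 0 := by
  classical
  refine ⟨LinearMap.pi fun i => if h : i ∈ B then hB.basis.coord ⟨i, h⟩ else 0,
    fun x => ?_, fun x i hi => by simp [hi]⟩
  conv_rhs => rw [← hB.basis.sum_equivFun x]
  rw [← Finset.sum_subset (Finset.subset_univ B) fun i _ hi => by simp [hi],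
    ← Finset.sum_coe_sort B]
  exact Finset.sum_congr rfl fun i _ => by simp [hB.basis_apply]

theorem IsSubbasis.card_eq_finrank {a : ι → W} {B : Finset ι} (hB : IsSubbasis a B) :
    B.card = Module.finrank ℝ W := by
  rw [Module.finrank_eq_card_basis hB.basis, Fintype.card_coe]

variable [Fintype ι]

open Classical in
/-- The coordinates with respect to a subbasis, extended by zero to the whole index set. -/
noncomputable def coords (a : ι → W) (B : Finset ι) : W →ₗ[ℝ] ι → ℝ :=
  if hB : IsSubbasis a B then hB.exists_coords.choose else 0

namespace IsSubbasis

variable {a : ι → W} {B : Finset ι}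

theorem sum_coords (hB : IsSubbasis a B) (x : W) : ∑ i, coords a B x i • a i = x := by
  rw [coords, dif_pos hB]
  exact hB.exists_coords.choose_spec.1 x

theorem coords_of_notMem (hB : IsSubbasis a B) (x : W) {i : ι} (hi : i ∉ B) :
    coords a B x i = 0 := by
  rw [coords, dif_pos hB]
  exact hB.exists_coords.choose_spec.2 x i hi

theorem coords_eq (hB : IsSubbasis a B) {x : W} {c : ι → ℝ} (hc : ∀ i ∉ B, c i = 0)
    (hx : ∑ i, c i • a i = x) : coords a B x = c := by
  have hzero : ∑ i, (coords a B x i - c i) • a i = 0 := by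
    simp only [sub_smul, Finset.sum_sub_distrib, hx, hB.sum_coords, sub_self]
  rw [← Finset.sum_subset (Finset.subset_univ B)
    fun i _ hi => by simp [hc i hi, hB.coords_of_notMem x hi]] at hzero
  ext i
  by_cases hi : i ∈ B
  · exact sub_eq_zero.1 (linearIndepOn_finset_iff.1 hB.1 _ hzero i hi)
  · rw [hc i hi, hB.coords_of_notMem x hi]

theorem coords_apply_self [DecidableEq ι] (hB : IsSubbasis a B) {i : ι} (hi : i ∈ B) :
    coords a B (a i) = Pi.single i 1 := by
  refine hB.coords_eq (fun j hj => ?_) ?_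
  · exact Pi.single_eq_of_ne (fun h : j = i => hj (h ▸ hi)) _
  · simp [Pi.single_apply, ite_smul]

theorem map_eq_sum_coords (hB : IsSubbasis a B) {h : W →ₗ[ℝ] ℝ} (ha : ∀ i, h (a i) = 1)
    (x : W) : h x = ∑ i, coords a B x i := by
  conv_lhs => rw [← hB.sum_coords x]
  simp [ha]

end IsSubbasis

theorem LinearIndepOn.exists_isSubbasis {a : ι → W}
    (hspan : Submodule.span ℝ (Set.range a) = ⊤) {I : Set ι} (hI : LinearIndepOn ℝ a I) :
    ∃ B : Finset ι, I ⊆ B ∧ IsSubbasis a B := by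
  obtain ⟨b, -, hIb, hb, hli⟩ := exists_linearIndepOn_extension hI (Set.subset_univ I)
  refine ⟨b.toFinite.toFinset, by simpa using hIb, by simpa using hli, ?_⟩
  rw [eq_top_iff, ← hspan, Submodule.span_le]
  simpa using hb

/-- A point of an open set avoiding finitely many hyperplanes. -/
theorem exists_mem_forall_ne_zero {κ : Type*} (s : Finset κ) (φ : κ → (ι → ℝ) →ₗ[ℝ] ℝ)
    (hφ : ∀ k ∈ s, ∃ v, φ k v ≠ 0) {U : Set (ι → ℝ)} (hU : IsOpen U) (hne : U.Nonempty) :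
    ∃ v ∈ U, ∀ k ∈ s, φ k v ≠ 0 := by
  classical
  induction s using Finset.induction_on generalizing U with
  | empty => exact hne.imp fun v hv => ⟨hv, by simp⟩
  | insert k s _ ih =>
    have hcont : Continuous (φ k) := (φ k).continuous_of_finiteDimensional
    obtain ⟨v, hv⟩ := hφ k (Finset.mem_insert_self k s)
    obtain ⟨u, hu⟩ := hne
    have hne' : (U ∩ {x | φ k x ≠ 0}).Nonempty := by
      by_cases hku : φ k u = 0
      · have hlim : Filter.Tendsto (fun t : ℝ => u + t • v) (nhdsWithin 0 {0}ᶜ) (nhds u) := by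
          have : Continuous fun t : ℝ => u + t • v := by fun_prop
          simpa using (this.tendsto 0).mono_left nhdsWithin_le_nhds
        obtain ⟨t, ht, ht0⟩ := ((hlim.eventually (hU.mem_nhds hu)).and
          self_mem_nhdsWithin).exists
        exact ⟨_, ht, by simpa [hku, hv] using ht0⟩
      · exact ⟨u, hu, hku⟩
    obtain ⟨x, ⟨hxU, hxk⟩, hx⟩ := ih (fun j hj => hφ j (Finset.mem_insert_of_mem hj))
      (hU.inter (isOpen_ne_fun hcont continuous_const)) hne'
    exact ⟨x, hxU, by simpa using ⟨hxk, hx⟩⟩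

/-- Moving a nonnegative vector in a direction that only decreases positive entries. -/
theorem exists_pos_forall_nonneg_add_mul {c r : ι → ℝ} (hc : ∀ i, 0 ≤ c i)
    (hr : ∀ i, r i < 0 → 0 < c i) : ∃ η > 0, ∀ i, 0 ≤ c i + η * r i := by
  have : ∀ᶠ η : ℝ in nhdsWithin 0 (Set.Ioi 0), ∀ i, 0 ≤ c i + η * r i := by
    refine Filter.eventually_all.2 fun i => ?_
    by_cases hi : r i < 0
    · have hlim : Filter.Tendsto (fun η : ℝ => c i + η * r i) (nhdsWithin 0 (Set.Ioi 0))
          (nhds (c i)) := by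
        have : Continuous fun η : ℝ => c i + η * r i := by fun_prop
        simpa using (this.tendsto 0).mono_left nhdsWithin_le_nhds
      exact (hlim.eventually (lt_mem_nhds (hr i hi))).mono fun _ h => h.le
    · filter_upwards [self_mem_nhdsWithin] with η hη
      exact add_nonneg (hc i) (mul_nonneg (le_of_lt hη) (not_lt.1 hi))
  obtain ⟨η, hη, hpos⟩ := (this.and self_mem_nhdsWithin).exists
  exact ⟨η, hpos, hη⟩

/-- A subbasis all of whose reduced costs with respect to the weight `w` are nonnegative. These
are the maximal cells of the regular subdivision of the cone induced by `w`. -/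
def IsOptimalSubbasis (a : ι → W) (w : ι → ℝ) (B : Finset ι) : Prop :=
  IsSubbasis a B ∧ ∀ e, ∑ i, coords a B (a e) i * w i ≤ w e

theorem exists_isOptimalSubbasis [FiniteDimensional ℝ W] {a : ι → W}
    (hspan : Submodule.span ℝ (Set.range a) = ⊤) {h : W →ₗ[ℝ] ℝ} (ha : ∀ i, h (a i) = 1)
    (w : ι → ℝ) {z : W} {c₀ : ι → ℝ} (hc₀ : ∀ i, 0 ≤ c₀ i) (hz : ∑ i, c₀ i • a i = z)
    (hgen : ∀ B, IsSubbasis a B → ∀ i ∈ B, coords a B z i ≠ 0) :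
    ∃ B, IsOptimalSubbasis a w B ∧ ∀ i, 0 ≤ coords a B z i := by
  classical
  let C : Set (ι → ℝ) := {c | (∀ i, 0 ≤ c i) ∧ ∑ i, c i • a i = z}
  have hCcompact : IsCompact C := by
    refine (isCompact_Icc (a := (0 : ι → ℝ)) (b := fun _ => h z)).of_isClosed_subset ?_ ?_
    · refine (isClosed_Ici (a := (0 : ι → ℝ))).inter (isClosed_eq ?_ continuous_const)
      fun_prop
    · rintro c ⟨hc, hcz⟩
      refine ⟨hc, fun i => ?_⟩
      have : h z = ∑ i, c i := by simp [← hcz, ha]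
      rw [this]
      exact Finset.single_le_sum (fun j _ => hc j) (Finset.mem_univ i)
  have hcost : Continuous fun c : ι → ℝ => ∑ i, c i * w i := by fun_prop
  obtain ⟨m, hm, hmin⟩ := hCcompact.exists_isMinOn ⟨c₀, hc₀, hz⟩ hcost.continuousOn
  have hMcompact : IsCompact (C ∩ {c | ∑ i, c i * w i = ∑ i, m i * w i}) :=
    hCcompact.inter_right (isClosed_eq hcost continuous_const)
  obtain ⟨c, hc⟩ := hMcompact.extremePoints_nonempty ⟨m, hm, rfl⟩
  obtain ⟨⟨⟨hc0, hcz⟩, hcm⟩, hext⟩ := mem_extremePoints.1 hc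
  have hcm : ∑ i, c i * w i = ∑ i, m i * w i := hcm
  -- a direction along a linear relation cannot decrease the cost
  have hmove : ∀ r : ι → ℝ, (∀ i, r i < 0 → 0 < c i) → ∑ i, r i • a i = 0 →
      ∃ η : ℝ, 0 < η ∧ c + η • r ∈ C ∧ 0 ≤ ∑ i, r i * w i := by
    intro r hr hr0
    obtain ⟨η, hη, hnonneg⟩ := exists_pos_forall_nonneg_add_mul hc0 hr
    have hmem : c + η • r ∈ C := by
      refine ⟨by simpa using hnonneg, ?_⟩
      simp only [Pi.add_apply, Pi.smul_apply, smul_eq_mul, add_smul, mul_smul,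
        Finset.sum_add_distrib, ← Finset.smul_sum, hr0, hcz, smul_zero, add_zero]
    refine ⟨η, hη, hmem, ?_⟩
    have hle : ∑ i, m i * w i ≤ ∑ i, (c + η • r) i * w i := hmin hmem
    simp only [Pi.add_apply, Pi.smul_apply, smul_eq_mul, add_mul, mul_assoc,
      Finset.sum_add_distrib, ← Finset.mul_sum, hcm] at hle
    exact nonneg_of_mul_nonneg_right (by linarith) hη
  have hli : LinearIndepOn ℝ a ((Finset.univ.filter fun i => c i ≠ 0 : Finset ι) : Set ι) := by
    rw [linearIndepOn_finset_iff]
    intro g hg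
    let r : ι → ℝ := fun i => if c i ≠ 0 then g i else 0
    have hrc : ∀ i, r i ≠ 0 → 0 < c i := fun i hi =>
      lt_of_le_of_ne (hc0 i) fun h => hi (by simp [r, ← h])
    have hr0 : ∑ i, r i • a i = 0 := by
      rw [← hg, Finset.sum_filter]
      exact Finset.sum_congr rfl fun i _ => by simp only [r, ite_smul, zero_smul]
    obtain ⟨η, hη, hmem, hw⟩ := hmove r (fun i hi => hrc i hi.ne) hr0
    obtain ⟨η', hη', hmem', hw'⟩ := hmove (-r) (fun i hi => hrc i (by simpa using hi.ne'))
      (by simp [hr0])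
    have hw0 : ∑ i, r i * w i = 0 := by
      simp only [Pi.neg_apply, neg_mul, Finset.sum_neg_distrib] at hw'
      linarith
    have hM : c + η • r ∈ C ∩ {c | ∑ i, c i * w i = ∑ i, m i * w i} := by
      refine ⟨hmem, ?_⟩
      simp only [Set.mem_ofPred_eq, Pi.add_apply, Pi.smul_apply, smul_eq_mul, add_mul, mul_assoc,
        Finset.sum_add_distrib, ← Finset.mul_sum, hcm, hw0, mul_zero, add_zero]
    have hM' : c + η' • -r ∈ C ∩ {c | ∑ i, c i * w i = ∑ i, m i * w i} := by
      refine ⟨hmem', ?_⟩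
      simp only [Set.mem_ofPred_eq, Pi.add_apply, Pi.smul_apply, Pi.neg_apply, smul_eq_mul, add_mul,
        mul_assoc, neg_mul, mul_neg, Finset.sum_neg_distrib,
        Finset.sum_add_distrib, ← Finset.mul_sum, hcm, hw0, mul_zero, neg_zero, add_zero]
    have hseg : c ∈ openSegment ℝ (c + η • r) (c + η' • -r) := by
      refine ⟨η' / (η + η'), η / (η + η'), by positivity, by positivity, by field_simp; ring, ?_⟩
      ext i
      simp only [Pi.add_apply, Pi.smul_apply, Pi.neg_apply, smul_eq_mul]
      field_simp
      ring
    have hrz := (hext _ hM _ hM' hseg).1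
    intro i hi
    have := congrFun hrz i
    have hci : c i ≠ 0 := by simpa using hi
    simpa [r, hci, hη.ne'] using this
  obtain ⟨B, hsub, hB⟩ := hli.exists_isSubbasis hspan
  have hcB : coords a B z = c := by
    refine hB.coords_eq (fun i hi => ?_) hcz
    by_contra hne
    exact hi (hsub (by simpa using hne))
  refine ⟨B, ⟨hB, fun e => ?_⟩, fun i => hcB ▸ hc0 i⟩
  have hneg : ∀ i, (Pi.single e 1 - coords a B (a e) : ι → ℝ) i < 0 → 0 < c i := by
    intro i hi
    have hiB : i ∈ B := by
      by_contra hiB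
      have hs : 0 ≤ (Pi.single e 1 : ι → ℝ) i := by
        rw [Pi.single_apply]
        split <;> norm_num
      rw [Pi.sub_apply, hB.coords_of_notMem _ hiB] at hi
      linarith
    exact lt_of_le_of_ne (hc0 i) (hcB ▸ hgen B hB i hiB).symm
  have hrel : ∑ i, (Pi.single e 1 - coords a B (a e) : ι → ℝ) i • a i = 0 := by
    simp [sub_smul, Finset.sum_sub_distrib, hB.sum_coords, Pi.single_apply, ite_smul]
  obtain ⟨_, _, _, hle⟩ := hmove _ hneg hrel
  simpa [sub_mul, Finset.sum_sub_distrib, Pi.single_apply] using hle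

/-- Nonnegativity of `t`, strict when the reference coordinate `s` is negative. -/
def HalfOpenNonneg (s t : ℝ) : Prop := 0 ≤ t ∧ (s < 0 → 0 < t)

/-- The simplicial cone spanned by a subbasis without the facets visible from `q`. -/
def halfOpenCone (a : ι → W) (q : W) (B : Finset ι) : Set W :=
  {x | ∀ i, HalfOpenNonneg (coords a B q i) (coords a B x i)}

theorem exists_mem_halfOpenCone [FiniteDimensional ℝ W] {a : ι → W}
    (hspan : Submodule.span ℝ (Set.range a) = ⊤) {h : W →ₗ[ℝ] ℝ} (ha : ∀ i, h (a i) = 1)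
    (w : ι → ℝ) {v : ι → ℝ} (hv : ∀ i, 0 ≤ v i)
    (hgen : ∀ B, IsSubbasis a B → ∀ i ∈ B, coords a B (∑ i, v i • a i) i ≠ 0)
    {x : W} {c : ι → ℝ} (hc : ∀ i, 0 ≤ c i) (hx : ∑ i, c i • a i = x) :
    ∃ B, IsOptimalSubbasis a w B ∧ x ∈ halfOpenCone a (∑ i, v i • a i) B := by
  classical
  set q := ∑ i, v i • a i with hq
  by_contra! hcon
  have hne : ∀ᶠ ε : ℝ in nhdsWithin 0 (Set.Ioi 0), ∀ B, ∀ i,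
      IsSubbasis a B → i ∈ B → coords a B (x + ε • q) i ≠ 0 := by
    refine Filter.eventually_all.2 fun B => Filter.eventually_all.2 fun i => ?_
    by_cases hB : IsSubbasis a B ∧ i ∈ B
    · have hfin : {-(coords a B x i / coords a B q i)}ᶜ ∈ nhdsWithin (0 : ℝ) (Set.Ioi 0) := by
        by_cases h0 : -(coords a B x i / coords a B q i) ≤ 0
        · filter_upwards [self_mem_nhdsWithin] with ε hε
          exact (lt_of_le_of_lt h0 hε).ne'
        · exact mem_nhdsWithin_of_mem_nhds (isOpen_compl_singleton.mem_nhds (by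
            simp only [Set.mem_compl_iff, Set.mem_singleton_iff]
            exact (not_le.1 h0).ne))
      filter_upwards [hfin] with ε hε _ _ h0
      apply hε
      have := hgen B hB.1 i hB.2
      simp only [map_add, map_smul, Pi.add_apply, Pi.smul_apply, smul_eq_mul] at h0
      rw [Set.mem_singleton_iff]
      field_simp
      linarith
    · exact Filter.Eventually.of_forall fun ε h1 h2 => absurd ⟨h1, h2⟩ hB
  have hneg : ∀ᶠ ε : ℝ in nhdsWithin 0 (Set.Ioi 0), ∀ B,
      IsOptimalSubbasis a w B → ∃ i, coords a B (x + ε • q) i < 0 := by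
    refine Filter.eventually_all.2 fun B => ?_
    by_cases hB : IsOptimalSubbasis a w B
    · have hxB := hcon B hB
      simp only [halfOpenCone, HalfOpenNonneg, Set.mem_ofPred_eq, not_forall] at hxB
      obtain ⟨i, hi⟩ := hxB
      by_cases h0 : 0 ≤ coords a B x i
      · have hi' : coords a B q i < 0 ∧ coords a B x i ≤ 0 := by
          by_contra hcontra
          exact hi ⟨h0, fun hlt => not_le.1 fun hle => hcontra ⟨hlt, hle⟩⟩
        filter_upwards [self_mem_nhdsWithin] with ε hε _
        refine ⟨i, ?_⟩
        simp only [map_add, map_smul, Pi.add_apply, Pi.smul_apply, smul_eq_mul]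
        have := mul_neg_of_pos_of_neg (show (0 : ℝ) < ε from hε) hi'.1
        linarith
      · have hlim : Filter.Tendsto (fun ε : ℝ => coords a B (x + ε • q) i)
            (nhdsWithin 0 (Set.Ioi 0)) (nhds (coords a B x i)) := by
          have : Continuous fun ε : ℝ => coords a B (x + ε • q) i := by
            simp only [map_add, map_smul, Pi.add_apply, Pi.smul_apply, smul_eq_mul]
            fun_prop
          simpa using (this.tendsto 0).mono_left nhdsWithin_le_nhds
        exact (hlim.eventually (gt_mem_nhds (not_le.1 h0))).mono fun ε hε _ => ⟨i, hε⟩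
    · exact Filter.Eventually.of_forall fun ε h1 => absurd h1 hB
  obtain ⟨ε, ⟨hεne, hεneg⟩, hε⟩ := ((hne.and hneg).and self_mem_nhdsWithin).exists
  have hε : 0 < ε := hε
  obtain ⟨B, hB, hBpos⟩ := exists_isOptimalSubbasis hspan ha w (z := x + ε • q)
    (c₀ := fun i => c i + ε * v i)
    (fun i => add_nonneg (hc i) (mul_nonneg hε.le (hv i)))
    (by simp only [add_smul, mul_smul, Finset.sum_add_distrib, ← Finset.smul_sum, hx, hq])
    (fun B hB i hi => hεne B i hB hi)
  obtain ⟨i, hi⟩ := hεneg B hB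
  exact absurd (hBpos i) (not_le.2 hi)

theorem eq_of_mem_halfOpenCone {a : ι → W} {w : ι → ℝ} {q x : W}
    (hw : ∀ B, IsSubbasis a B → ∀ e ∉ B, ∑ i, coords a B (a e) i * w i ≠ w e)
    (hgen : ∀ B, IsSubbasis a B → ∀ i ∈ B, coords a B q i ≠ 0)
    {B B' : Finset ι} (hB : IsOptimalSubbasis a w B) (hB' : IsOptimalSubbasis a w B')
    (hx : x ∈ halfOpenCone a q B) (hx' : x ∈ halfOpenCone a q B') : B = B' := by
  have hpos : ∀ B, IsSubbasis a B → x ∈ halfOpenCone a q B →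
      ∀ᶠ ε : ℝ in nhdsWithin 0 (Set.Ioi 0), ∀ i, i ∈ B → 0 < coords a B (x + ε • q) i := by
    intro B hB hx
    refine Filter.eventually_all.2 fun i => ?_
    by_cases hi : i ∈ B
    · rcases (hx i).1.eq_or_lt with h0 | h0
      · have hqi : 0 < coords a B q i :=
          lt_of_le_of_ne (not_lt.1 fun hlt => ((hx i).2 hlt).ne h0) (hgen B hB i hi).symm
        filter_upwards [self_mem_nhdsWithin] with ε hε _
        simp only [map_add, map_smul, Pi.add_apply, Pi.smul_apply, smul_eq_mul, ← h0, zero_add]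
        exact mul_pos hε hqi
      · have hlim : Filter.Tendsto (fun ε : ℝ => coords a B (x + ε • q) i)
            (nhdsWithin 0 (Set.Ioi 0)) (nhds (coords a B x i)) := by
          have : Continuous fun ε : ℝ => coords a B (x + ε • q) i := by
            simp only [map_add, map_smul, Pi.add_apply, Pi.smul_apply, smul_eq_mul]
            fun_prop
          simpa using (this.tendsto 0).mono_left nhdsWithin_le_nhds
        exact (hlim.eventually (lt_mem_nhds h0)).mono fun ε hε _ => hε
    · exact Filter.Eventually.of_forall fun ε h1 => absurd h1 hi
  obtain ⟨ε, hε, hε'⟩ := ((hpos B hB.1 hx).and (hpos B' hB'.1 hx')).exists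
  set z := x + ε • q
  -- comparison of the costs of the two representations of `z`
  have hcmp : ∀ {B B' : Finset ι}, IsSubbasis a B →
      ∑ i, coords a B' z i * w i =
        ∑ e, coords a B z e * ∑ i, coords a B' (a e) i * w i := by
    intro B B' hB
    conv_lhs => rw [← hB.sum_coords z]
    simp only [map_sum, map_smul, Finset.sum_apply, Pi.smul_apply, smul_eq_mul, Finset.sum_mul,
      Finset.mul_sum, mul_assoc]
    rw [Finset.sum_comm]
  have hnonneg : ∀ {B : Finset ι}, IsSubbasis a B → (∀ i, i ∈ B → 0 < coords a B z i) →
      ∀ i, 0 ≤ coords a B z i := by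
    intro B hB hpos i
    by_cases hi : i ∈ B
    · exact (hpos i hi).le
    · exact (hB.coords_of_notMem z hi).ge
  have hle : ∀ {B B' : Finset ι}, IsSubbasis a B → (∀ i, i ∈ B → 0 < coords a B z i) →
      IsOptimalSubbasis a w B' → ∑ i, coords a B' z i * w i ≤ ∑ i, coords a B z i * w i := by
    intro B B' hB hpos hB'
    rw [hcmp (B' := B') hB]
    exact Finset.sum_le_sum fun e _ => mul_le_mul_of_nonneg_left (hB'.2 e) (hnonneg hB hpos e)
  have hsub : ∀ {B B' : Finset ι}, IsSubbasis a B → (∀ i, i ∈ B → 0 < coords a B z i) →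
      IsOptimalSubbasis a w B' → ∑ i, coords a B' z i * w i = ∑ i, coords a B z i * w i →
      B ⊆ B' := by
    intro B B' hB hpos hB' heq e he
    by_contra heB'
    rw [hcmp (B' := B') hB] at heq
    have := (Finset.sum_eq_sum_iff_of_le fun e _ =>
      mul_le_mul_of_nonneg_left (hB'.2 e) (hnonneg hB hpos e)).1 heq e (Finset.mem_univ e)
    exact hw B' hB'.1 e heB' (mul_left_cancel₀ (hpos e he).ne' this)
  have heq := le_antisymm (hle hB.1 hε hB') (hle hB'.1 hε' hB)
  exact (hsub hB.1 hε hB' heq).antisymm (hsub hB'.1 hε' hB heq.symm)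

/-- The points of `L` of height `n` in the half-open cone of `B` such that for `j ∈ J` subtracting
the generator `a j` leaves the half-open cone. -/
def coneSlice (a : ι → W) (h : W →ₗ[ℝ] ℝ) (L : AddSubgroup W) (q : W) (B J : Finset ι) (n : ℕ) :
    Set W :=
  {x | x ∈ L ∧ h x = n ∧ x ∈ halfOpenCone a q B ∧
    ∀ j ∈ J, ¬ HalfOpenNonneg (coords a B q j) (coords a B x j - 1)}

theorem coneSlice_zero_insert [DecidableEq ι] {a : ι → W} {h : W →ₗ[ℝ] ℝ}
    (ha : ∀ i, h (a i) = 1) {L : AddSubgroup W} {q : W} {B J : Finset ι} (hB : IsSubbasis a B)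
    {b : ι} : coneSlice a h L q B (insert b J) 0 = coneSlice a h L q B J 0 := by
  ext x
  simp only [coneSlice, Set.mem_ofPred_eq, Finset.forall_mem_insert]
  refine ⟨fun ⟨h1, h2, h3, _, h5⟩ => ⟨h1, h2, h3, h5⟩,
    fun ⟨h1, h2, h3, h5⟩ => ⟨h1, h2, h3, fun h4 => ?_, h5⟩⟩
  have hle := Finset.single_le_sum (fun j _ => (h3 j).1) (Finset.mem_univ b)
  rw [← hB.map_eq_sum_coords ha, h2] at hle
  have := h4.1
  push_cast at hle
  linarith

theorem coneSlice_succ [DecidableEq ι] {a : ι → W} {h : W →ₗ[ℝ] ℝ}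
    (ha : ∀ i, h (a i) = 1) {L : AddSubgroup W} (haL : ∀ i, a i ∈ L) {q : W} {B J : Finset ι}
    (hB : IsSubbasis a B) {b : ι} (hb : b ∈ B) (hbJ : b ∉ J) (n : ℕ) :
    coneSlice a h L q B J (n + 1) =
      coneSlice a h L q B (insert b J) (n + 1) ∪ (· + a b) '' coneSlice a h L q B J n := by
  ext x
  simp only [coneSlice, Set.mem_union, Set.mem_image, Set.mem_ofPred_eq, Finset.forall_mem_insert]
  constructor
  · rintro ⟨h1, h2, h3, h5⟩
    by_cases h4 : HalfOpenNonneg (coords a B q b) (coords a B x b - 1)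
    · refine Or.inr ⟨x - a b, ⟨L.sub_mem h1 (haL b), by simp [h2, ha], fun i => ?_, fun j hj => ?_⟩,
        sub_add_cancel _ _⟩
      · by_cases hi : i = b
        · subst hi
          simpa [hB.coords_apply_self hb] using h4
        · simpa [hB.coords_apply_self hb, hi] using h3 i
      · have hjb : j ≠ b := fun h => hbJ (h ▸ hj)
        simpa [hB.coords_apply_self hb, hjb] using h5 j hj
    · exact Or.inl ⟨h1, h2, h3, h4, h5⟩
  · rintro (⟨h1, h2, h3, _, h5⟩ | ⟨y, ⟨h1, h2, h3, h5⟩, rfl⟩)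
    · exact ⟨h1, h2, h3, h5⟩
    · refine ⟨L.add_mem h1 (haL b), by simp [h2, ha], fun i => ?_, fun j hj => ?_⟩
      · by_cases hi : i = b
        · subst hi
          have := (h3 i).1
          simp only [map_add, hB.coords_apply_self hb, Pi.add_apply, Pi.single_eq_same]
          exact ⟨by linarith, fun _ => by linarith⟩
        · simpa [hB.coords_apply_self hb, hi] using h3 i
      · have hjb : j ≠ b := fun h => hbJ (h ▸ hj)
        simpa [hB.coords_apply_self hb, hjb] using h5 j hj

/-- The generating function of the slices. -/
noncomputable def sliceSeries (a : ι → W) (h : W →ₗ[ℝ] ℝ) (L : AddSubgroup W) (q : W)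
    (B J : Finset ι) : PowerSeries ℤ :=
  PowerSeries.mk fun n => ((coneSlice a h L q B J n).ncard : ℤ)

theorem one_sub_X_mul_sliceSeries [DecidableEq ι] {a : ι → W} {h : W →ₗ[ℝ] ℝ}
    (ha : ∀ i, h (a i) = 1) {L : AddSubgroup W} (haL : ∀ i, a i ∈ L) {q : W} {B J : Finset ι}
    (hB : IsSubbasis a B) (hfin : ∀ n, (coneSlice a h L q B ∅ n).Finite)
    {b : ι} (hb : b ∈ B) (hbJ : b ∉ J) :
    (1 - PowerSeries.X) * sliceSeries a h L q B J = sliceSeries a h L q B (insert b J) := by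
  have hfinJ : ∀ J n, (coneSlice a h L q B J n).Finite := fun J n =>
    (hfin n).subset fun x hx => ⟨hx.1, hx.2.1, hx.2.2.1, by simp⟩
  ext n
  rw [sub_mul, one_mul, map_sub]
  cases n with
  | zero => simp [sliceSeries, coneSlice_zero_insert ha hB]
  | succ n =>
    have hdisj : Disjoint (coneSlice a h L q B (insert b J) (n + 1))
        ((· + a b) '' coneSlice a h L q B J n) := by
      rw [Set.disjoint_left]
      rintro _ hx ⟨y, hy, rfl⟩
      refine hx.2.2.2 b (Finset.mem_insert_self b J) ?_
      simpa [hB.coords_apply_self hb] using hy.2.2.1 b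
    rw [PowerSeries.coeff_succ_X_mul]
    simp only [sliceSeries, PowerSeries.coeff_mk]
    rw [coneSlice_succ ha haL hB hb hbJ n,
      Set.ncard_union_eq hdisj (hfinJ _ _) ((hfinJ _ _).image _),
      Set.ncard_image_of_injective _ (add_left_injective (a b))]
    push_cast
    ring

theorem one_sub_X_pow_mul_sliceSeries {a : ι → W} {h : W →ₗ[ℝ] ℝ}
    (ha : ∀ i, h (a i) = 1) {L : AddSubgroup W} (haL : ∀ i, a i ∈ L) {q : W} {B : Finset ι}
    (hB : IsSubbasis a B) (hfin : ∀ n, (coneSlice a h L q B ∅ n).Finite) :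
    (1 - PowerSeries.X) ^ B.card * sliceSeries a h L q B ∅ = sliceSeries a h L q B B := by
  classical
  have key : ∀ J ⊆ B,
      (1 - PowerSeries.X) ^ J.card * sliceSeries a h L q B ∅ = sliceSeries a h L q B J := by
    intro J
    induction J using Finset.induction_on with
    | empty => simp
    | insert b J hbJ ih =>
      intro hJ
      rw [Finset.insert_subset_iff] at hJ
      rw [Finset.card_insert_of_notMem hbJ, pow_succ', mul_assoc, ih hJ.2,
        one_sub_X_mul_sliceSeries ha haL hB hfin hJ.1 hbJ]
  exact key B Finset.Subset.rfl

theorem IsSubbasis.exists_generic_weight {a : ι → W} {B₀ : Finset ι} (hB₀ : IsSubbasis a B₀) :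
    ∃ w : ι → ℝ, IsOptimalSubbasis a w B₀ ∧
      ∀ B, IsSubbasis a B → ∀ e ∉ B, ∑ i, coords a B (a e) i * w i ≠ w e := by
  classical
  let φ : Finset ι × ι → (ι → ℝ) →ₗ[ℝ] ℝ := fun k =>
    ∑ i, coords a k.1 (a k.2) i • LinearMap.proj i - LinearMap.proj k.2
  have hφ : ∀ k w, φ k w = ∑ i, coords a k.1 (a k.2) i * w i - w k.2 := fun k w => by
    simp [φ, LinearMap.sum_apply]
  let U : Set (ι → ℝ) := ⋂ e : ι, {w | e ∉ B₀ → φ (B₀, e) w < 0}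
  have hU : IsOpen U := by
    refine isOpen_iInter_of_finite fun e => ?_
    by_cases he : e ∈ B₀
    · simp [he]
    · simpa [he] using
        isOpen_lt (φ (B₀, e)).continuous_of_finiteDimensional continuous_const
  have hne : U.Nonempty := by
    refine ⟨fun i => if i ∈ B₀ then 0 else 1, Set.mem_iInter.2 fun e he => ?_⟩
    rw [hφ, Finset.sum_eq_zero]
    · simp [he]
    · intro i _
      by_cases hi : i ∈ B₀
      · simp [hi]
      · simp [hB₀.coords_of_notMem _ hi]
  obtain ⟨w, hwU, hw⟩ := exists_mem_forall_ne_zero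
    (Finset.univ.filter fun k : Finset ι × ι => IsSubbasis a k.1 ∧ k.2 ∉ k.1) φ
    (fun k hk => ⟨Pi.single k.2 1, by
      simp only [Finset.mem_filter, Finset.mem_univ, true_and] at hk
      simp [hφ, Pi.single_apply, hk.1.coords_of_notMem _ hk.2]⟩) hU hne
  refine ⟨w, ⟨hB₀, fun e => ?_⟩, fun B hB e he heq => ?_⟩
  · by_cases he : e ∈ B₀
    · simp [hB₀.coords_apply_self he, Pi.single_apply]
    · have := Set.mem_iInter.1 hwU e he
      rw [hφ] at this
      linarith
  · exact hw (B, e) (by simp [hB, he]) (by rw [hφ, heq, sub_self])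

theorem exists_generic_reference (a : ι → W) (B₀ : Finset ι) (e : ι) :
    ∃ v : ι → ℝ, (∀ i, 0 ≤ v i) ∧
      (∀ i, coords a B₀ (a e) i < 0 → coords a B₀ (∑ i, v i • a i) i < 0) ∧
      ∀ B, IsSubbasis a B → ∀ i ∈ B, coords a B (∑ i, v i • a i) i ≠ 0 := by
  classical
  let φ : Finset ι × ι → (ι → ℝ) →ₗ[ℝ] ℝ := fun k =>
    LinearMap.proj k.2 ∘ₗ coords a k.1 ∘ₗ Fintype.linearCombination ℝ a
  have hφ : ∀ k v, φ k v = coords a k.1 (∑ i, v i • a i) k.2 := fun k v => rfl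
  have hsingle : ∀ i : ι, ∑ j, (Pi.single i 1 : ι → ℝ) j • a j = a i := fun i => by
    simp [Pi.single_apply, ite_smul]
  let U : Set (ι → ℝ) :=
    ⋂ i : ι, ({v | 0 < v i} ∩ {v | coords a B₀ (a e) i < 0 → φ (B₀, i) v < 0})
  have hU : IsOpen U := by
    refine isOpen_iInter_of_finite fun i => IsOpen.inter ?_ ?_
    · exact isOpen_lt continuous_const (continuous_apply i)
    · by_cases hi : coords a B₀ (a e) i < 0
      · simpa [hi] using
          isOpen_lt (φ (B₀, i)).continuous_of_finiteDimensional continuous_const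
      · simp [hi]
  have hne : U.Nonempty := by
    have hev : ∀ᶠ t : ℝ in nhdsWithin 0 (Set.Ioi 0),
        Pi.single e 1 + t • (fun _ => 1 : ι → ℝ) ∈ U := by
      simp only [U, Set.mem_iInter]
      refine Filter.eventually_all.2 fun i => Filter.Eventually.and ?_ ?_
      · filter_upwards [self_mem_nhdsWithin] with t ht
        have hs : 0 ≤ (Pi.single e 1 : ι → ℝ) i := by
          rw [Pi.single_apply]
          split <;> norm_num
        have ht : 0 < t := ht
        simp only [Pi.add_apply, Pi.smul_apply, smul_eq_mul, mul_one]
        linarith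
      · by_cases hi : coords a B₀ (a e) i < 0
        · have hlim : Filter.Tendsto
              (fun t : ℝ => φ (B₀, i) (Pi.single e 1 + t • (fun _ => 1 : ι → ℝ)))
              (nhdsWithin 0 (Set.Ioi 0)) (nhds (coords a B₀ (a e) i)) := by
            have hcont : Continuous
                fun t : ℝ => φ (B₀, i) (Pi.single e 1 + t • (fun _ => 1 : ι → ℝ)) := by
              simp only [map_add, map_smul, smul_eq_mul]
              fun_prop
            have := (hcont.tendsto 0).mono_left (nhdsWithin_le_nhds (s := Set.Ioi 0))
            simpa only [zero_smul, add_zero, hφ, hsingle] using this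
          exact (hlim.eventually (gt_mem_nhds hi)).mono fun t ht _ => ht
        · exact Filter.Eventually.of_forall fun t h1 => absurd h1 hi
    obtain ⟨t, ht⟩ := hev.exists
    exact ⟨_, ht⟩
  obtain ⟨v, hvU, hv⟩ := exists_mem_forall_ne_zero
    (Finset.univ.filter fun k : Finset ι × ι => IsSubbasis a k.1 ∧ k.2 ∈ k.1) φ
    (fun k hk => ⟨Pi.single k.2 1, by
      simp only [Finset.mem_filter, Finset.mem_univ, true_and] at hk
      simp only [hφ, hsingle, hk.1.coords_apply_self hk.2, Pi.single_eq_same, ne_eq, one_ne_zero,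
        not_false_eq_true]⟩) hU hne
  rw [Set.mem_iInter] at hvU
  exact ⟨v, fun i => le_of_lt (hvU i).1, fun i hi => (hvU i).2 hi,
    fun B hB i hi => hv (B, i) (by simp [hB, hi])⟩

/-- The points of `L` of height `n` in the cone generated by the family `a`. -/
def coneLevel (a : ι → W) (h : W →ₗ[ℝ] ℝ) (L : AddSubgroup W) (n : ℕ) : Set W :=
  {x | x ∈ L ∧ h x = n ∧ ∃ c : ι → ℝ, (∀ i, 0 ≤ c i) ∧ ∑ i, c i • a i = x}

/-- The `h*`-polynomial of a cone over a lattice polytope has degree at most the dimension of the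
cone, and its degree is at least the number of negative coefficients in any expression of a
generator in terms of linearly independent generators. -/
theorem coeff_one_sub_X_pow_mul_coneLevel [FiniteDimensional ℝ W] {a : ι → W}
    (hspan : Submodule.span ℝ (Set.range a) = ⊤) {h : W →ₗ[ℝ] ℝ} (ha : ∀ i, h (a i) = 1)
    {L : AddSubgroup W} (haL : ∀ i, a i ∈ L) (hfin : ∀ n, (coneLevel a h L n).Finite)
    {I : Set ι} (hI : LinearIndepOn ℝ a I) {e : ι} {β : ι → ℝ} (hβI : ∀ i ∉ I, β i = 0)
    (hβ : ∑ i, β i • a i = a e) :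
    (∀ n, Module.finrank ℝ W < n →
      PowerSeries.coeff n ((1 - PowerSeries.X) ^ Module.finrank ℝ W *
        PowerSeries.mk fun n => ((coneLevel a h L n).ncard : ℤ)) = 0) ∧
    ∃ n, {i | β i < 0}.ncard ≤ n ∧
      PowerSeries.coeff n ((1 - PowerSeries.X) ^ Module.finrank ℝ W *
        PowerSeries.mk fun n => ((coneLevel a h L n).ncard : ℤ)) ≠ 0 := by
  classical
  obtain ⟨B₀, hIB₀, hB₀⟩ := hI.exists_isSubbasis hspan
  obtain ⟨w, hwB₀, hw⟩ := hB₀.exists_generic_weight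
  obtain ⟨v, hv, hvneg, hgen⟩ := exists_generic_reference a B₀ e
  have hβcoords : coords a B₀ (a e) = β :=
    hB₀.coords_eq (fun i hi => hβI i fun h => hi (hIB₀ h)) hβ
  rw [hβcoords] at hvneg
  set q := ∑ i, v i • a i
  let T : Finset (Finset ι) := Finset.univ.filter fun B => IsOptimalSubbasis a w B
  have hT : ∀ {B}, B ∈ T ↔ IsOptimalSubbasis a w B := by simp [T]
  have hsub : ∀ B ∈ T, ∀ n, coneSlice a h L q B ∅ n ⊆ coneLevel a h L n := fun B hB n x hx =>
    ⟨hx.1, hx.2.1, coords a B x, fun i => (hx.2.2.1 i).1, (hT.1 hB).1.sum_coords x⟩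
  have hcover : ∀ n, (coneLevel a h L n).ncard = ∑ B ∈ T, (coneSlice a h L q B ∅ n).ncard := by
    intro n
    have hun : coneLevel a h L n = ⋃ B ∈ T, coneSlice a h L q B ∅ n := by
      refine Set.Subset.antisymm (fun x hx => ?_) (Set.iUnion₂_subset fun B hB => hsub B hB n)
      obtain ⟨hxL, hxn, c, hc, hcx⟩ := hx
      obtain ⟨B, hB, hxB⟩ := exists_mem_halfOpenCone hspan ha w hv hgen hc hcx
      exact Set.mem_iUnion₂.2 ⟨B, hT.2 hB, hxL, hxn, hxB, by simp⟩
    rw [hun, ← finsum_mem_coe_finset]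
    refine Set.Finite.ncard_biUnion T.finite_toSet (fun B hB => (hfin n).subset (hsub B hB n)) ?_
    intro B hB B' hB' hne
    refine Set.disjoint_left.2 fun x hx hx' => hne ?_
    exact eq_of_mem_halfOpenCone hw hgen (hT.1 hB) (hT.1 hB') hx.2.2.1 hx'.2.2.1
  have hseries : (1 - PowerSeries.X) ^ Module.finrank ℝ W *
      PowerSeries.mk (fun n => ((coneLevel a h L n).ncard : ℤ)) =
        ∑ B ∈ T, sliceSeries a h L q B B := by
    have : PowerSeries.mk (fun n => ((coneLevel a h L n).ncard : ℤ)) =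
        ∑ B ∈ T, sliceSeries a h L q B ∅ := by
      ext n
      simp [sliceSeries, hcover]
    rw [this, Finset.mul_sum]
    refine Finset.sum_congr rfl fun B hB => ?_
    rw [← (hT.1 hB).1.card_eq_finrank]
    exact one_sub_X_pow_mul_sliceSeries ha haL (hT.1 hB).1
      fun n => (hfin n).subset (hsub B hB n)
  have hcoeff : ∀ n, PowerSeries.coeff n ((1 - PowerSeries.X) ^ Module.finrank ℝ W *
      PowerSeries.mk fun n => ((coneLevel a h L n).ncard : ℤ)) =
        ∑ B ∈ T, ((coneSlice a h L q B B n).ncard : ℤ) := by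
    intro n
    rw [hseries]
    simp [sliceSeries]
  refine ⟨fun n hn => ?_, ?_⟩
  · rw [hcoeff]
    refine Finset.sum_eq_zero fun B hB => ?_
    have hBb := (hT.1 hB).1
    suffices coneSlice a h L q B B n = ∅ by simp [this]
    refine Set.eq_empty_of_forall_notMem fun x hx => ?_
    have hle : ∀ i ∈ B, coords a B x i ≤ 1 := by
      intro i hi
      by_contra! hlt
      exact hx.2.2.2 i hi ⟨by linarith, fun _ => by linarith⟩
    have hcard := Finset.sum_le_sum hle
    rw [Finset.sum_subset (Finset.subset_univ B) fun i _ hi => hBb.coords_of_notMem x hi,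
      ← hBb.map_eq_sum_coords ha, hx.2.1, Finset.sum_const, nsmul_one, hBb.card_eq_finrank] at hcard
    exact absurd hn (not_lt.2 (by exact_mod_cast hcard))
  · let M : Finset ι := Finset.univ.filter fun i => coords a B₀ q i < 0
    have hM : ∀ {i}, i ∈ M ↔ coords a B₀ q i < 0 := by simp [M]
    have hMB : ∀ i ∉ B₀, (if i ∈ M then (1 : ℝ) else 0) = 0 := fun i hi => by
      simp [hM, hB₀.coords_of_notMem q hi]
    have hcoordsM : coords a B₀ (∑ i ∈ M, a i) = fun i => if i ∈ M then (1 : ℝ) else 0 :=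
      hB₀.coords_eq hMB (by simp [ite_smul])
    refine ⟨M.card, ?_, ?_⟩
    · rw [← Set.ncard_coe_finset]
      exact Set.ncard_le_ncard (fun i hi => Finset.mem_coe.2 (hM.2 (hvneg i hi)))
    rw [hcoeff]
    refine ne_of_gt (Finset.sum_pos' (fun B _ => by positivity) ⟨B₀, hT.2 hwB₀, ?_⟩)
    have hslicefin : (coneSlice a h L q B₀ B₀ M.card).Finite :=
      (hfin M.card).subset fun x hx =>
        hsub B₀ (hT.2 hwB₀) _ ⟨hx.1, hx.2.1, hx.2.2.1, by simp⟩
    have hmem : ∑ i ∈ M, a i ∈ coneSlice a h L q B₀ B₀ M.card := by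
      refine ⟨sum_mem fun i _ => haL i, by simp [ha], fun i => ?_, fun j _ hj => ?_⟩
      · rw [hcoordsM]
        by_cases hi : i ∈ M
        · simp [hi, HalfOpenNonneg]
        · simp [hi, HalfOpenNonneg, not_lt.1 (hM.not.1 hi)]
      · rw [hcoordsM] at hj
        by_cases hjM : j ∈ M
        · simp [hjM, HalfOpenNonneg, hM.1 hjM] at hj
        · have := hj.1
          simp [hjM] at this
          linarith
    exact_mod_cast (Set.ncard_pos hslicefin).2 ⟨_, hmem⟩

end ConeDecomposition

section EdgePolytope

theorem coeff_one_sub_X_pow (n j : ℕ) :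
    PowerSeries.coeff j ((1 - PowerSeries.X : PowerSeries ℤ) ^ n) = (-1) ^ j * (n.choose j : ℤ) := by
  induction n generalizing j with
  | zero => cases j <;> simp [PowerSeries.coeff_one]
  | succ n ih =>
    rw [pow_succ', sub_mul, one_mul, map_sub, ih]
    cases j with
    | zero => simp
    | succ j =>
      rw [PowerSeries.coeff_succ_X_mul, ih, Nat.choose_succ_succ]
      push_cast
      ring

theorem deltaCoeff_eq_coeff {N : ℕ} (P : Set (Fin N → ℝ)) (i : ℕ) :
    deltaCoeff P i = PowerSeries.coeff i ((1 - PowerSeries.X) ^ (polyDim P + 1) *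
      PowerSeries.mk fun n => (ehr P n : ℤ)) := by
  rw [PowerSeries.coeff_mul, Finset.Nat.sum_antidiagonal_eq_sum_range_succ_mk, deltaCoeff]
  exact Finset.sum_congr rfl fun j _ => by rw [coeff_one_sub_X_pow, PowerSeries.coeff_mk]

theorem rho_mk {N : ℕ} {x y : Fin N} (hxy : x ≠ y) :
    rho s(x, y) = Pi.single x 1 + Pi.single y 1 := by
  ext v
  simp only [rho, Sym2.mem_iff, Pi.add_apply, Pi.single_apply]
  by_cases hx : v = x
  · have : v ≠ y := hx ▸ hxy
    simp [hx, hxy]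
  · simp [hx]

/-- The linear functional equal to one on all vertices of an edge polytope. -/
noncomputable def halfSum (N : ℕ) : (Fin N → ℝ) →ₗ[ℝ] ℝ :=
  (2⁻¹ : ℝ) • ∑ v, LinearMap.proj v

theorem halfSum_rho {N : ℕ} {G : SimpleGraph (Fin N)} (e : G.edgeSet) :
    halfSum N (rho (e : Sym2 (Fin N))) = 1 := by
  obtain ⟨e, he⟩ := e
  induction e with
  | _ x y =>
    have hne : x ≠ y := G.ne_of_adj he
    simp [rho_mk hne, halfSum, LinearMap.sum_apply, Finset.sum_add_distrib]
    norm_num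

variable {N : ℕ} (G : SimpleGraph (Fin N))

theorem edgePolytope_eq_image [Fintype G.edgeSet] :
    edgePolytope G =
      Fintype.linearCombination ℝ (fun e : G.edgeSet => rho (e : Sym2 (Fin N))) ''
        stdSimplex ℝ G.edgeSet := by
  classical
  rw [← convexHull_basis_eq_stdSimplex, LinearMap.image_convexHull, ← Set.range_comp, edgePolytope,
    Set.image_eq_range]
  congr 2
  funext e
  simp [Fintype.linearCombination_apply, ite_smul]

theorem mem_smul_edgePolytope_iff [Fintype G.edgeSet] {n : ℕ} (hn : n ≠ 0) {y : Fin N → ℝ} :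
    y ∈ (n : ℝ) • edgePolytope G ↔ halfSum N y = n ∧
      ∃ c : G.edgeSet → ℝ, (∀ e, 0 ≤ c e) ∧ ∑ e, c e • rho (e : Sym2 (Fin N)) = y := by
  have hn' : (n : ℝ) ≠ 0 := by exact_mod_cast hn
  rw [edgePolytope_eq_image]
  constructor
  · rintro ⟨_, ⟨c, ⟨hc0, hc1⟩, rfl⟩, rfl⟩
    refine ⟨?_, fun e => n * c e, fun e => mul_nonneg (Nat.cast_nonneg n) (hc0 e), ?_⟩
    · simp [Fintype.linearCombination_apply, halfSum_rho, hc1]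
    · simp [Fintype.linearCombination_apply, Finset.smul_sum, mul_smul]
  · rintro ⟨hy, c, hc0, rfl⟩
    refine ⟨_, ⟨fun e => (n : ℝ)⁻¹ * c e,
      ⟨fun e => mul_nonneg (by positivity) (hc0 e), ?_⟩, rfl⟩, ?_⟩
    · simp only [map_sum, map_smul, halfSum_rho, smul_eq_mul, mul_one] at hy
      rw [← Finset.mul_sum, hy, inv_mul_cancel₀ hn']
    · simp only [Fintype.linearCombination_apply, Finset.smul_sum, smul_smul,
        mul_inv_cancel_left₀ hn']

/-- The linear span of the edge polytope. -/
def edgeSpan : Submodule ℝ (Fin N → ℝ) :=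
  Submodule.span ℝ (Set.range fun e : G.edgeSet => rho (e : Sym2 (Fin N)))

/-- The vertices of the edge polytope, as elements of its linear span. -/
noncomputable def edgeVec (e : G.edgeSet) : edgeSpan G :=
  ⟨rho (e : Sym2 (Fin N)), Submodule.subset_span ⟨e, rfl⟩⟩

theorem span_range_edgeVec : Submodule.span ℝ (Set.range (edgeVec G)) = ⊤ := by
  apply Submodule.map_injective_of_injective (edgeSpan G).injective_subtype
  rw [Submodule.map_span, ← Set.range_comp, Submodule.map_top, Submodule.range_subtype]
  rfl

theorem polyDim_edgePolytope_add_one [Nonempty G.edgeSet] :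
    polyDim (edgePolytope G) + 1 = Module.finrank ℝ (edgeSpan G) := by
  obtain ⟨e₀⟩ := ‹Nonempty G.edgeSet›
  set s := Set.range fun e : G.edgeSet => rho (e : Sym2 (Fin N)) with hs
  have he₀ : rho (e₀ : Sym2 (Fin N)) ∈ s := ⟨e₀, rfl⟩
  have hker : vectorSpan ℝ s ≤ LinearMap.ker (halfSum N) := by
    rw [vectorSpan_eq_span_vsub_set_right ℝ he₀, Submodule.span_le]
    rintro _ ⟨_, ⟨e, rfl⟩, rfl⟩
    simp [halfSum_rho]
  have hnot : rho (e₀ : Sym2 (Fin N)) ∉ vectorSpan ℝ s := fun h => by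
    simpa [halfSum_rho] using hker h
  have hspan : vectorSpan ℝ s ⊔ Submodule.span ℝ {rho (e₀ : Sym2 (Fin N))} = edgeSpan G := by
    apply le_antisymm
    · rw [sup_le_iff, Submodule.span_singleton_le_iff_mem, vectorSpan_def, Submodule.span_le]
      refine ⟨?_, Submodule.subset_span he₀⟩
      rintro _ ⟨x, hx, y, hy, rfl⟩
      exact Submodule.sub_mem _ (Submodule.subset_span hx) (Submodule.subset_span hy)
    · rw [edgeSpan, Submodule.span_le]
      intro x hx
      rw [← sub_add_cancel x (rho (e₀ : Sym2 (Fin N)))]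
      exact Submodule.add_mem_sup (vsub_mem_vectorSpan ℝ hx he₀)
        (Submodule.mem_span_singleton_self _)
  rw [polyDim, edgePolytope, affineSpan_convexHull, direction_affineSpan, Set.image_eq_range, ← hs,
    ← Submodule.finrank_sup_span_singleton hnot, hspan]

/-- Entrywise cast of integer vectors to real vectors. -/
def intCastVec (N : ℕ) : (Fin N → ℤ) →+ (Fin N → ℝ) :=
  (Int.castAddHom ℝ).compLeft (Fin N)

theorem intCastVec_injective (N : ℕ) : Function.Injective (intCastVec N) := fun _ _ hxy =>
  funext fun i => Int.cast_injective (α := ℝ) (congrFun hxy i)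

/-- The integer points of the linear span of the edge polytope. -/
def edgeLattice : AddSubgroup (edgeSpan G) :=
  (intCastVec N).range.comap (edgeSpan G).subtype.toAddMonoidHom

theorem edgeVec_mem_edgeLattice (e : G.edgeSet) : edgeVec G e ∈ edgeLattice G := by
  refine ⟨fun v => by classical exact if v ∈ (e : Sym2 (Fin N)) then 1 else 0, ?_⟩
  ext v
  simp [intCastVec, edgeVec, rho]

/-- The height function on the linear span of the edge polytope. -/
noncomputable def edgeHeight : edgeSpan G →ₗ[ℝ] ℝ :=
  halfSum N ∘ₗ (edgeSpan G).subtype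

theorem edgeHeight_edgeVec (e : G.edgeSet) : edgeHeight G (edgeVec G e) = 1 :=
  halfSum_rho e

theorem coe_sum_smul_edgeVec [Fintype G.edgeSet] (c : G.edgeSet → ℝ) :
    ((∑ e, c e • edgeVec G e : edgeSpan G) : Fin N → ℝ) =
      ∑ e, c e • rho (e : Sym2 (Fin N)) := by
  simp [edgeVec]

theorem finite_coneLevel_edgeVec [Fintype G.edgeSet] (n : ℕ) :
    (coneLevel (edgeVec G) (edgeHeight G) (edgeLattice G) n).Finite := by
  refine (((Set.finite_Icc (0 : Fin N → ℤ) (fun _ => n)).image (intCastVec N)).preimage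
    (edgeSpan G).injective_subtype.injOn).subset ?_
  rintro x ⟨⟨z, hz⟩, hxn, c, hc, rfl⟩
  refine ⟨z, ?_, hz⟩
  have hsum : ∑ e, c e = n := by
    simpa [edgeHeight_edgeVec] using hxn
  have hzv : ∀ v, (z v : ℝ) = ∑ e, c e * rho (e : Sym2 (Fin N)) v := by
    intro v
    have := congrFun hz v
    simpa [intCastVec, edgeVec] using this
  have hrho : ∀ (e : G.edgeSet) v, 0 ≤ rho (e : Sym2 (Fin N)) v ∧ rho (e : Sym2 (Fin N)) v ≤ 1 := by
    intro e v
    rw [rho]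
    split <;> norm_num
  refine ⟨fun v => ?_, fun v => ?_⟩
  · have : (0 : ℝ) ≤ z v := by
      rw [hzv]
      exact Finset.sum_nonneg fun e _ => mul_nonneg (hc e) (hrho e v).1
    exact_mod_cast this
  · have : (z v : ℝ) ≤ n := by
      rw [hzv, ← hsum]
      exact Finset.sum_le_sum fun e _ => mul_le_of_le_one_right (hc e) (hrho e v).2
    exact_mod_cast this

theorem ehr_edgePolytope [Fintype G.edgeSet] (n : ℕ) :
    ehr (edgePolytope G) n =
      (coneLevel (edgeVec G) (edgeHeight G) (edgeLattice G) n).ncard := by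
  rcases eq_or_ne n 0 with rfl | hn
  · have : coneLevel (edgeVec G) (edgeHeight G) (edgeLattice G) 0 = {0} := by
      refine Set.eq_singleton_iff_unique_mem.2
        ⟨⟨zero_mem _, by simp, 0, fun _ => le_rfl, by simp⟩, ?_⟩
      rintro _ ⟨-, hx0, c, hc, rfl⟩
      have hsum : ∑ e, c e = 0 := by
        simpa [edgeHeight_edgeVec] using hx0
      have hc0 := (Finset.sum_eq_zero_iff_of_nonneg fun e _ => hc e).1 hsum
      exact Finset.sum_eq_zero fun e he => by rw [hc0 e he, zero_smul]
    simp [ehr, this]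
  · rw [ehr, if_neg hn, ← Set.ncard_image_of_injective _ (edgeSpan G).injective_subtype]
    change Nat.card {x : Fin N → ℤ | intCastVec N x ∈ (n : ℝ) • edgePolytope G} = _
    rw [Nat.card_coe_set_eq, ← Set.ncard_image_of_injective _ (intCastVec_injective N)]
    congr 1
    ext y
    constructor
    · rintro ⟨z, hz, rfl⟩
      obtain ⟨hheight, c, hc, hcz⟩ := (mem_smul_edgePolytope_iff G hn).1 hz
      have hcoe := (coe_sum_smul_edgeVec G c).trans hcz
      exact ⟨∑ e, c e • edgeVec G e, ⟨⟨z, hcoe.symm⟩,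
        (congrArg (halfSum N) hcoe).trans hheight, c, hc, rfl⟩, hcoe⟩
    · rintro ⟨_, ⟨⟨z, hz⟩, hheight, c, hc, rfl⟩, rfl⟩
      refine ⟨z, (mem_smul_edgePolytope_iff G hn).2 ⟨?_, c, hc, ?_⟩, hz⟩
      · rw [hz]
        exact hheight
      · rw [hz]
        exact (coe_sum_smul_edgeVec G c).symm

/-- The degree of the edge polytope is at least the number of negative coefficients in any
expression of an edge vector in terms of linearly independent edge vectors. -/
theorem ncard_neg_le_polyDeg_edgePolytope [Fintype G.edgeSet] {I : Set G.edgeSet}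
    (hI : LinearIndepOn ℝ (edgeVec G) I) {e : G.edgeSet} {β : G.edgeSet → ℝ}
    (hβI : ∀ i ∉ I, β i = 0) (hβ : ∑ i, β i • edgeVec G i = edgeVec G e) :
    {i | β i < 0}.ncard ≤ polyDeg (edgePolytope G) := by
  have : Nonempty G.edgeSet := ⟨e⟩
  have hdelta : ∀ i, deltaCoeff (edgePolytope G) i =
      PowerSeries.coeff i ((1 - PowerSeries.X) ^ Module.finrank ℝ (edgeSpan G) * PowerSeries.mk
        fun n => ((coneLevel (edgeVec G) (edgeHeight G) (edgeLattice G) n).ncard : ℤ)) := by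
    intro i
    simp only [deltaCoeff_eq_coeff, polyDim_edgePolytope_add_one, ehr_edgePolytope]
  obtain ⟨hbound, n, hn, hne⟩ := coeff_one_sub_X_pow_mul_coneLevel (span_range_edgeVec G)
    (edgeHeight_edgeVec G) (edgeVec_mem_edgeLattice G) (finite_coneLevel_edgeVec G) hI hβI hβ
  refine hn.trans (le_csSup ⟨Module.finrank ℝ (edgeSpan G), fun i hi => ?_⟩ ?_)
  · by_contra! hlt
    exact hi ((hdelta i).trans (hbound i hlt))
  · rw [Set.mem_ofPred_eq, hdelta]
    exact hne

theorem linearIndependent_rho_of_path {m : ℕ} {u : ℕ → Fin N} (hu : Set.InjOn u {i | i ≤ m}) :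
    LinearIndependent ℝ fun i : Fin m => rho s(u i, u (i + 1)) := by
  rw [Fintype.linearIndependent_iff]
  intro g hg
  have key : ∀ k (hk : k < m), g ⟨k, hk⟩ = 0 := by
    intro k
    induction k using Nat.strong_induction_on with
    | _ k ih =>
      intro hk
      have hval := congrFun hg (u k)
      rw [Finset.sum_apply, Finset.sum_eq_single ⟨k, hk⟩] at hval
      · simpa [rho] using hval
      · rintro ⟨j, hj⟩ - hjk
        have hjk : j ≠ k := fun h => hjk (Fin.ext h)
        rcases lt_or_gt_of_ne hjk with hlt | hlt
        · simp [ih j hlt hj]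
        · have h1 : u k ≠ u j := fun h =>
            hjk (hu (Set.mem_ofPred.2 hk.le) (Set.mem_ofPred.2 hj.le) h).symm
          have h2 : u k ≠ u (j + 1) := fun h => by
            have := hu (Set.mem_ofPred.2 hk.le) (Set.mem_ofPred.2 hj) h
            omega
          simp [rho, h1, h2]
      · simp
  exact fun i => key i i.2

theorem sum_range_neg_one_pow_smul_add {E : Type*} [AddCommGroup E] [Module ℝ E] (p : ℕ → E)
    (m : ℕ) : ∑ i ∈ Finset.range m, (-1 : ℝ) ^ i • (p i + p (i + 1)) =
      p 0 - (-1 : ℝ) ^ m • p m := by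
  induction m with
  | zero => simp
  | succ m ih =>
    rw [Finset.sum_range_succ, ih, pow_succ]
    module

end EdgePolytope

/-- If a finite connected simple graph `G` has an even cycle of
length `≥ 8` possessing a chord, and `G` has no `4`-cycle, then `deg(P_G) ≥ 3`. -/
theorem polyDeg_ge_three_of_long_even_cycle_with_chord
    {N : ℕ} (G : SimpleGraph (Fin N)) (hG : G.Connected)
    {v : Fin N} (c : G.Walk v v) (hc : c.IsCycle)
    (heven : Even c.length) (hlen : 8 ≤ c.length)
    (hchord : ∃ x y, x ∈ c.support ∧ y ∈ c.support ∧ G.Adj x y ∧ s(x, y) ∉ c.edges)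
    (h4 : ¬ ∃ (u : Fin N) (w : G.Walk u u), w.IsCycle ∧ w.length = 4) :
    3 ≤ polyDeg (edgePolytope G) := by
  classical
  obtain ⟨m, hm⟩ : ∃ m, c.length = m + 1 := ⟨c.length - 1, by omega⟩
  have hmodd : Odd m := by
    rw [hm, Nat.even_add_one] at heven
    exact Nat.not_even_iff_odd.1 heven
  let u : ℕ → Fin N := c.getVert
  have hadj : ∀ {i}, i ≤ m → G.Adj (u i) (u (i + 1)) := fun hi =>
    c.adj_getVert_succ (by omega)
  have hu : Set.InjOn u {i | i ≤ m} := by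
    simpa [hm] using hc.getVert_injOn'
  have hend : u (m + 1) = u 0 := by
    simp [u, ← hm]
  have hli := linearIndependent_rho_of_path hu
  let ed : Fin m → G.edgeSet := fun i => ⟨s(u i, u (i + 1)), hadj i.2.le⟩
  let e : G.edgeSet := ⟨s(u m, u (m + 1)), hadj le_rfl⟩
  have hed : Function.Injective ed := fun i j hij =>
    hli.injective (congrArg (fun e : G.edgeSet => rho (e : Sym2 (Fin N))) hij)
  let β : G.edgeSet → ℝ := Function.extend ed (fun i => (-1) ^ (i : ℕ)) 0
  have hβed : ∀ i, β (ed i) = (-1) ^ (i : ℕ) := fun i => hed.extend_apply _ _ i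
  have hβI : ∀ i ∉ Set.range ed, β i = 0 := fun i hi => Function.extend_apply' _ _ i hi
  have hI : LinearIndepOn ℝ (edgeVec G) (Set.range ed) :=
    (linearIndepOn_range_iff hed _).2 (LinearIndependent.of_comp (edgeSpan G).subtype hli)
  have hβ : ∑ i, β i • edgeVec G i = edgeVec G e := by
    let p : ℕ → Fin N → ℝ := fun i => Pi.single (u i) 1
    apply Subtype.ext
    rw [coe_sum_smul_edgeVec, ← Finset.sum_subset (Finset.subset_univ (Finset.univ.image ed)),
      Finset.sum_image hed.injOn]
    · calc ∑ i, β (ed i) • rho (ed i : Sym2 (Fin N))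
          = ∑ i : Fin m, (-1 : ℝ) ^ (i : ℕ) • (p i + p (i + 1)) :=
            Finset.sum_congr rfl fun i _ => by rw [hβed, ← rho_mk (hadj i.2.le).ne]
        _ = p 0 + p m := by
            rw [Fin.sum_univ_eq_sum_range fun i => (-1 : ℝ) ^ i • (p i + p (i + 1)),
              sum_range_neg_one_pow_smul_add, hmodd.neg_one_pow, neg_one_smul, sub_neg_eq_add]
        _ = rho s(u m, u (m + 1)) := by
            rw [rho_mk (hadj le_rfl).ne, hend, add_comm]
    · intro i _ hi
      rw [hβI i (by simpa using hi), zero_smul]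
  refine le_trans ?_ (ncard_neg_le_polyDeg_edgePolytope G hI hβI hβ)
  let odds : Finset (Fin m) := {⟨1, by omega⟩, ⟨3, by omega⟩, ⟨5, by omega⟩}
  have hodds : (odds.image ed).card = 3 := by
    rw [Finset.card_image_of_injective _ hed]
    simp [odds]
  rw [← hodds, ← Set.ncard_coe_finset]
  refine Set.ncard_le_ncard fun i hi => ?_
  obtain ⟨j, hj, rfl⟩ := Finset.mem_image.1 (Finset.mem_coe.1 hi)
  rw [Set.mem_ofPred_eq, hβed]
  simp only [odds, Finset.mem_insert, Finset.mem_singleton] at hj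
  rcases hj with rfl | rfl | rfl <;> norm_num
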